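/- In the setting of the context, assume additionally (E4): deg_u(a_{ii} e_i) ≥ deg_u(a_{ij} e_j) for all 1 ≤ i ≤ r−1 and 1 ≤ j ≤ r. Assume a_{ss} ≠ 0, a_{rs} ≠ 0, d := deg(a_{rs}) − deg(a_{ss}) ≥ 0, c = LC(a_{rs})·LC(a_{ss})^{−1}, and b_{rj} = a_{rj} − c·x^d·a_{sj}. Then for every non-identity permutation π of {1,…,r}: Σ_{i ≠ r} deg_u(a_{ii} e_i) + deg_u(b_{rr} e_r) > Σ_{i ≠ r} deg_u(a_{iπ(i)} e_{π(i)}) + deg_u(b_{rπ(r)} e_{π(r)}). -/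

import Mathlib

open scoped Classical

/-- `deg_u(a·e_j) = u_x·deg(a) + u_j` for nonzero `a ∈ k[x]`, and `−∞` (`⊥`) for `a = 0`. -/
noncomputable def degu {k : Type*} [Field k] (ux : ℕ) (u : ℕ → ℕ)
    (a : Polynomial k) (j : ℕ) : WithBot ℕ :=
  if a = 0 then ⊥ else ((ux * a.natDegree + u j : ℕ) : WithBot ℕ)

/-!
Give the arc `i → j` the weight `w i j - w j j`. That the diagonal is the unique maximum-weight
permutation says that every nontrivial cycle has negative weight, and hence so does every closed
walk. Subtracting `q` times row `s` from row `r` replaces an arc `r → j` by one that weighs at most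
as much as either `r → j` itself or the walk `r → s → j`, so it turns the cycles of a permutation
into closed walks and cannot create a nonnegative cycle. The splitting of such a closed walk into
cycles is carried out on permutations: loops are added until every vertex has in- and out-degree
two, and the resulting graph is the union of two permutations `σ` and `τ`.
-/

section PermutationPairs

variable {ι : Type*} {π : Equiv.Perm ι} {r s : ι}

theorem not_sameCycle_mul_swap_of_pow_apply_eq [DecidableEq ι] (hrs : r ≠ s) {n : ℕ}
    (hn : (π ^ n) s = r) :
    ¬ (π * Equiv.swap r s).SameCycle r s := by
  have hex : ∃ n, (π ^ n) s = r := ⟨n, hn⟩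
  obtain ⟨N, hN, hmin⟩ : ∃ N, (π ^ N) s = r ∧ ∀ j < N, (π ^ j) s ≠ r :=
    ⟨Nat.find hex, Nat.find_spec hex, fun _ => Nat.find_min hex⟩
  have hN0 : 0 < N := Nat.pos_of_ne_zero fun h => hrs (by simpa [h] using hN.symm)
  have pow_ne_s : ∀ j ∈ Set.Ioc 0 N, (π ^ j) s ≠ s := fun j hj hjs =>
    hmin (N - j) (Nat.sub_lt hN0 hj.1) <| by
      rw [← hN, ← Nat.sub_add_cancel hj.2, pow_add, Equiv.Perm.mul_apply, hjs,
        Nat.add_sub_cancel]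
  -- The arc `π s, π² s, …, r` is closed up by the swap into a cycle that avoids `s`.
  let arc : Set ι := (fun j => (π ^ j) s) '' Set.Ioc 0 N
  have maps_arc : Set.MapsTo (π * Equiv.swap r s) arc arc := by
    rintro _ ⟨j, hj, rfl⟩
    rcases hj.2.lt_or_eq with hlt | rfl
    · refine ⟨j + 1, ⟨j.succ_pos, hlt⟩, ?_⟩
      simp only [Equiv.Perm.mul_apply, pow_succ',
        Equiv.swap_apply_of_ne_of_ne (hmin j hlt) (pow_ne_s j hj)]
    · exact ⟨1, ⟨one_pos, hN0⟩, by simp [hN]⟩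
  have bij_arc : Set.BijOn (π * Equiv.swap r s) arc arc :=
    (((Set.finite_Ioc 0 N).image _).injOn_iff_bijOn_of_mapsTo maps_arc).1
      (Equiv.injective _).injOn
  rintro ⟨z, hz⟩
  obtain ⟨j, hj, hjs⟩ : s ∈ arc :=
    hz ▸ (bij_arc.perm_zpow z).mapsTo ⟨N, ⟨hN0, le_rfl⟩, hN⟩
  exact pow_ne_s j hj hjs

theorem not_sameCycle_mul_swap [DecidableEq ι] (hrs : r ≠ s) (h : π.SameCycle r s) :
    ¬ (π * Equiv.swap r s).SameCycle r s := by
  obtain ⟨z, hz⟩ := h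
  obtain ⟨n, rfl | rfl⟩ := z.eq_nat_or_neg
  · rw [Equiv.swap_comm, Equiv.Perm.sameCycle_comm]
    exact not_sameCycle_mul_swap_of_pow_apply_eq hrs.symm (by simpa using hz)
  · refine not_sameCycle_mul_swap_of_pow_apply_eq hrs (n := n) ?_
    rwa [zpow_neg, zpow_natCast, Equiv.Perm.inv_eq_iff_eq, eq_comm] at hz

theorem exists_perm_pair_of_not_sameCycle (h : ¬ π.SameCycle r s) :
    ∃ σ τ : Equiv.Perm ι, σ r = s ∧ τ r = r ∧ σ s = π r ∧ τ s = π s ∧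
      ∀ i, i ≠ r → i ≠ s → s(σ i, τ i) = s(i, π i) := by
  refine ⟨π.cycleOf r * Equiv.swap r s, π * (π.cycleOf r)⁻¹, ?_, ?_, ?_, ?_, fun i hir his => ?_⟩
  · simp [Equiv.Perm.cycleOf_apply, h]
  · simp [Equiv.Perm.cycleOf_inv]
  · simp
  · simp [Equiv.Perm.cycleOf_inv, Equiv.Perm.cycleOf_apply, h]
  · by_cases hi : π.SameCycle r i <;>
      simp [Equiv.swap_apply_of_ne_of_ne hir his, Equiv.Perm.cycleOf_inv,
        Equiv.Perm.cycleOf_apply, hi, Sym2.eq_swap]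

theorem exists_perm_pair (π : Equiv.Perm ι) (hrs : r ≠ s) :
    ∃ σ τ : Equiv.Perm ι, σ r = s ∧ τ r = r ∧ s(σ s, τ s) = s(π r, π s) ∧
      ∀ i, i ≠ r → i ≠ s → s(σ i, τ i) = s(i, π i) := by
  by_cases h : π.SameCycle r s
  · obtain ⟨σ, τ, hσr, hτr, hσs, hτs, hστ⟩ :=
      exists_perm_pair_of_not_sameCycle (not_sameCycle_mul_swap hrs h)
    refine ⟨σ, τ, hσr, hτr, ?_, fun i hir his => ?_⟩
    · simp [hσs, hτs, Sym2.eq_swap]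
    · simpa [Equiv.swap_apply_of_ne_of_ne hir his] using hστ i hir his
  · obtain ⟨σ, τ, hσr, hτr, hσs, hτs, hστ⟩ := exists_perm_pair_of_not_sameCycle h
    exact ⟨σ, τ, hσr, hτr, by rw [hσs, hτs], hστ⟩

end PermutationPairs

section UniqueMaxDiagonal

variable {ι Γ : Type*}

theorem add_eq_add_of_sym2_eq {M : Type*} [AddCommMagma M] (f : ι → M) {i j i' j' : ι}
    (h : s(i, j) = s(i', j')) : f i + f j = f i' + f j' := by
  rcases Sym2.eq_iff.1 h with ⟨rfl, rfl⟩ | ⟨rfl, rfl⟩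
  · rfl
  · exact add_comm _ _

theorem sum_perm_pair_add_diag {M : Type*} [AddCommMonoid M] [DecidableEq ι] {I : Finset ι}
    {r s : ι} {π σ τ : ι → ι} (w : ι → ι → M) (hr : r ∈ I) (hs : s ∈ I) (hrs : r ≠ s)
    (hσr : σ r = s) (hτr : τ r = r) (hs_pair : s(σ s, τ s) = s(π r, π s))
    (h_pair : ∀ i, i ≠ r → i ≠ s → s(σ i, τ i) = s(i, π i)) :
    ∑ i ∈ I, w i (σ i) + ∑ i ∈ I, w i (τ i) + w s s =
      ∑ i ∈ I.erase r, w i (π i) + (w r s + w s (π r)) + ∑ i ∈ I, w i i := by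
  have hs_erase : s ∈ I.erase r := Finset.mem_erase.2 ⟨hrs.symm, hs⟩
  have off_rs : ∑ i ∈ (I.erase r).erase s, (w i (σ i) + w i (τ i)) =
      ∑ i ∈ (I.erase r).erase s, (w i i + w i (π i)) :=
    Finset.sum_congr rfl fun i hi => add_eq_add_of_sym2_eq (w i) <|
      h_pair i (Finset.ne_of_mem_erase (Finset.mem_of_mem_erase hi)) (Finset.ne_of_mem_erase hi)
  have at_s : w s (σ s) + w s (τ s) = w s (π r) + w s (π s) :=
    add_eq_add_of_sym2_eq (w s) hs_pair
  rw [← Finset.sum_add_distrib, ← Finset.add_sum_erase I _ hr,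
    ← Finset.add_sum_erase _ _ hs_erase, off_rs, at_s, hσr, hτr, Finset.sum_add_distrib,
    ← Finset.add_sum_erase I _ hr, ← Finset.add_sum_erase _ (fun i => w i i) hs_erase,
    ← Finset.add_sum_erase _ _ hs_erase]
  abel

theorem sum_update_row {M : Type*} [AddCommMonoid M] [DecidableEq ι] {I : Finset ι} {r : ι}
    (hr : r ∈ I) (w : ι → ι → M) (v : ι → M) (f : ι → ι) :
    ∑ i ∈ I, Function.update w r v i (f i) = ∑ i ∈ I.erase r, w i (f i) + v (f r) := by
  rw [← Finset.sum_erase_add _ _ hr, Function.update_self]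
  congr 1
  exact Finset.sum_congr rfl fun i hi => by
    rw [Function.update_of_ne (Finset.ne_of_mem_erase hi)]

/-- The identity is the unique permutation `π` of `I` maximizing `∑ i ∈ I, w i (π i)`.
Permutations of `I` are encoded as permutations of `ι` that fix the complement of `I`. -/
def IsUniqueMaxDiagonal [AddCommMonoid Γ] [Preorder Γ] (I : Finset ι)
    (w : ι → ι → WithBot Γ) : Prop :=
  ∀ π : Equiv.Perm ι, (∀ i ∉ I, π i = i) → π ≠ 1 →
    ∑ i ∈ I, w i (π i) < ∑ i ∈ I, w i i

theorem bijOn_of_forall_notMem_apply_eq {π : Equiv.Perm ι} {I : Set ι} (hI : ∀ i ∉ I, π i = i) :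
    Set.BijOn π I I := by
  refine π.bijOn fun i => not_iff_not.1 ⟨fun hπi => ?_, fun hi => by rwa [hI i hi]⟩
  rwa [← π.injective (hI _ hπi)]

theorem exists_perm_eqOn_of_bijOn {f : ι → ι} {I : Set ι} (hf : Set.BijOn f I I) :
    ∃ π : Equiv.Perm ι, (∀ i ∉ I, π i = i) ∧ Set.EqOn π f I :=
  ⟨Equiv.Perm.ofSubtype (p := (· ∈ I)) hf.equiv,
    fun _ hi => Equiv.Perm.ofSubtype_apply_of_not_mem _ hi,
    fun _ hi => Equiv.Perm.ofSubtype_apply_of_mem _ hi⟩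

theorem isUniqueMaxDiagonal_iff_forall_bijOn [AddCommMonoid Γ] [Preorder Γ] {I : Finset ι}
    {w : ι → ι → WithBot Γ} :
    IsUniqueMaxDiagonal I w ↔ ∀ f : ι → ι, Set.BijOn f I I → (∃ i ∈ I, f i ≠ i) →
      ∑ i ∈ I, w i (f i) < ∑ i ∈ I, w i i := by
  constructor
  · rintro h f hf ⟨i, hi, hfi⟩
    obtain ⟨π, hπ, hπf⟩ := exists_perm_eqOn_of_bijOn hf
    have hπ1 : π ≠ 1 := fun h1 => hfi <| by rw [← hπf hi, h1, Equiv.Perm.one_apply]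
    rw [← Finset.sum_congr rfl fun j hj => congrArg (w j) (hπf hj)]
    exact h π hπ hπ1
  · intro h π hπ hπ1
    obtain ⟨i, hi⟩ := not_forall.1 (mt Equiv.Perm.ext hπ1)
    exact h π (bijOn_of_forall_notMem_apply_eq hπ) ⟨i, not_imp_comm.1 (hπ i) hi, hi⟩

namespace IsUniqueMaxDiagonal

variable [AddCommMonoid Γ] [PartialOrder Γ] {I : Finset ι} {w : ι → ι → WithBot Γ}
  {π : Equiv.Perm ι} {r s : ι}

theorem sum_le (hw : IsUniqueMaxDiagonal I w) (hπ : ∀ i ∉ I, π i = i) :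
    ∑ i ∈ I, w i (π i) ≤ ∑ i ∈ I, w i i := by
  by_cases h : π = 1
  · simp [h]
  · exact (hw π hπ h).le

theorem sum_ne_bot (hw : IsUniqueMaxDiagonal I w) (hI : I.Nontrivial) : ∑ i ∈ I, w i i ≠ ⊥ := by
  obtain ⟨r, hr, s, hs, hrs⟩ := hI
  exact (hw (Equiv.swap r s)
    (fun _ hi => Equiv.swap_apply_of_ne_of_ne (ne_of_mem_of_not_mem hr hi).symm
      (ne_of_mem_of_not_mem hs hi).symm)
    (mt Equiv.swap_eq_one_iff.1 hrs)).ne_bot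

theorem diag_ne_bot (hw : IsUniqueMaxDiagonal I w) (hI : I.Nontrivial) (hs : s ∈ I) :
    w s s ≠ ⊥ := fun h =>
  hw.sum_ne_bot hI (WithBot.sum_eq_bot_iff.2 ⟨s, hs, h⟩)

variable [IsOrderedCancelAddMonoid Γ]

theorem sum_erase_add_walk_lt [DecidableEq ι] (hw : IsUniqueMaxDiagonal I w) (hr : r ∈ I)
    (hs : s ∈ I) (hrs : r ≠ s) (hπ : ∀ i ∉ I, π i = i) :
    ∑ i ∈ I.erase r, w i (π i) + (w r s + w s (π r)) < ∑ i ∈ I, w i i + w s s := by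
  obtain ⟨σ, τ, hσr, hτr, hs_pair, h_pair⟩ := exists_perm_pair π hrs
  have fixes : ∀ i ∉ I, σ i = i ∧ τ i = i := fun i hi => by
    simpa [hπ i hi] using
      h_pair i (ne_of_mem_of_not_mem hr hi).symm (ne_of_mem_of_not_mem hs hi).symm
  have hσ1 : σ ≠ 1 := fun h => hrs (by simpa [h] using hσr)
  have pair_lt : ∑ i ∈ I, w i (σ i) + ∑ i ∈ I, w i (τ i) < ∑ i ∈ I, w i i + ∑ i ∈ I, w i i :=
    (add_le_add_right (hw.sum_le fun i hi => (fixes i hi).2) _).trans_lt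
      (WithBot.add_lt_add_right (hw.sum_ne_bot ⟨r, hr, s, hs, hrs⟩)
        (hw σ (fun i hi => (fixes i hi).1) hσ1))
  refine lt_of_add_lt_add_right (a := ∑ i ∈ I, w i i) ?_
  calc _ = ∑ i ∈ I, w i (σ i) + ∑ i ∈ I, w i (τ i) + w s s :=
      (sum_perm_pair_add_diag w hr hs hrs hσr hτr hs_pair h_pair).symm
    _ < ∑ i ∈ I, w i i + ∑ i ∈ I, w i i + w s s :=
      WithBot.add_lt_add_right (hw.diag_ne_bot ⟨r, hr, s, hs, hrs⟩ hs) pair_lt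
    _ = _ := add_right_comm _ _ _

theorem apply_add_apply_lt_diag (hw : IsUniqueMaxDiagonal I w) (hr : r ∈ I) (hs : s ∈ I)
    (hrs : r ≠ s) : w r s + w s r < w r r + w s s := by
  have h := hw.sum_erase_add_walk_lt hr hs hrs (π := 1) fun _ _ => rfl
  simp only [Equiv.Perm.one_apply] at h
  rw [← Finset.sum_erase_add _ _ hr, add_assoc] at h
  exact lt_of_add_lt_add_left h

theorem update_row [DecidableEq ι] (hw : IsUniqueMaxDiagonal I w) (hr : r ∈ I) (hs : s ∈ I)
    (hrs : r ≠ s) {v : ι → WithBot Γ} (hdiag : w r r ≤ v r)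
    (hv : ∀ j, v j ≤ w r j ∨ v j + w s s ≤ w r s + w s j) :
    IsUniqueMaxDiagonal I (Function.update w r v) := by
  intro π hπ hπ1
  rw [sum_update_row hr w v π, sum_update_row hr w v fun i => i]
  suffices ∑ i ∈ I.erase r, w i (π i) + v (π r) < ∑ i ∈ I.erase r, w i i + w r r from
    this.trans_le (add_le_add_right hdiag _)
  rw [Finset.sum_erase_add I (fun i => w i i) hr]
  rcases hv (π r) with direct | walk
  · calc _ ≤ ∑ i ∈ I.erase r, w i (π i) + w r (π r) := add_le_add_right direct _
      _ = ∑ i ∈ I, w i (π i) := Finset.sum_erase_add _ _ hr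
      _ < _ := hw π hπ hπ1
  · refine lt_of_add_lt_add_right (a := w s s) ?_
    calc _ = ∑ i ∈ I.erase r, w i (π i) + (v (π r) + w s s) := add_assoc _ _ _
      _ ≤ ∑ i ∈ I.erase r, w i (π i) + (w r s + w s (π r)) := add_le_add_right walk _
      _ < _ := hw.sum_erase_add_walk_lt hr hs hrs hπ

end IsUniqueMaxDiagonal

end UniqueMaxDiagonal

section Degree

open Polynomial

variable {k : Type*} [Field k] {ux : ℕ} {u : ℕ → ℕ}

theorem degu_eq_map_degree (p : k[X]) (j : ℕ) :
    degu ux u p j = p.degree.map fun n => ux * n + u j := by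
  by_cases hp : p = 0
  · simp [degu, hp]
  · rw [degu, if_neg hp, degree_eq_natDegree hp]
    rfl

theorem degu_mono {p q : k[X]} (h : p.degree ≤ q.degree) (j : ℕ) :
    degu ux u p j ≤ degu ux u q j := by
  rw [degu_eq_map_degree, degu_eq_map_degree]
  have mono : Monotone fun n => ux * n + u j := fun _ _ hmn => by dsimp only; gcongr
  exact mono.withBot_map h

theorem degu_sub_le (p q : k[X]) (j : ℕ) :
    degu ux u (p - q) j ≤ max (degu ux u p j) (degu ux u q j) := by
  rcases le_max_iff.1 (degree_sub_le p q) with h | h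
  · exact le_max_of_le_left (degu_mono h j)
  · exact le_max_of_le_right (degu_mono h j)

theorem degu_mul_add_degu (q p₁ p₂ : k[X]) (i j : ℕ) :
    degu ux u (q * p₁) i + degu ux u p₂ j = degu ux u p₁ i + degu ux u (q * p₂) j := by
  by_cases h : q = 0 ∨ p₁ = 0 ∨ p₂ = 0
  · rcases h with rfl | rfl | rfl <;> simp [degu]
  · obtain ⟨hq, h₁, h₂⟩ : q ≠ 0 ∧ p₁ ≠ 0 ∧ p₂ ≠ 0 := by simpa using h
    simp only [degu, mul_eq_zero, hq, h₁, h₂, or_self, if_false, natDegree_mul hq h₁,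
      natDegree_mul hq h₂]
    norm_cast
    ring

theorem degree_C_mul_X_pow_mul_le {p q : k[X]} (c : k) {d : ℕ} (hq : q ≠ 0)
    (h : d + p.natDegree ≤ q.natDegree) : (C c * X ^ d * p).degree ≤ q.degree := by
  rw [degree_eq_natDegree hq]
  exact degree_le_of_natDegree_le <| natDegree_mul_le.trans <|
    (Nat.add_le_add_right (natDegree_C_mul_X_pow_le c d) _).trans h

end Degree

theorem stmt_16_general {k : Type*} [Field k] (ux : ℕ) (u : ℕ → ℕ) {I : Finset ℕ} {r s : ℕ}
    (hr : r ∈ I) (hs : s ∈ I) (hrs : r ≠ s) (a : ℕ → ℕ → Polynomial k)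
    (hmax : ∀ π : ℕ → ℕ, Set.BijOn π I I → (∃ i ∈ I, π i ≠ i) →
      ∑ i ∈ I, degu ux u (a i (π i)) (π i) < ∑ i ∈ I, degu ux u (a i i) i)
    (q : Polynomial k) (hq : (q * a s s).degree ≤ (a r s).degree)
    (π : ℕ → ℕ) (hπ : Set.BijOn π I I) (hne : ∃ i ∈ I, π i ≠ i) :
    ∑ i ∈ I.erase r, degu ux u (a i (π i)) (π i) +
        degu ux u (a r (π r) - q * a s (π r)) (π r) <
      ∑ i ∈ I.erase r, degu ux u (a i i) i + degu ux u (a r r - q * a s r) r := by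
  let w : ℕ → ℕ → WithBot ℕ := fun i j => degu ux u (a i j) j
  let v : ℕ → WithBot ℕ := fun j => degu ux u (a r j - q * a s j) j
  have hw : IsUniqueMaxDiagonal I w := isUniqueMaxDiagonal_iff_forall_bijOn.2 hmax
  have walk (j : ℕ) : degu ux u (q * a s j) j + w s s ≤ w r s + w s j :=
    calc _ = w s j + degu ux u (q * a s s) s := degu_mul_add_degu q (a s j) (a s s) j s
      _ ≤ w s j + w r s := add_le_add_right (degu_mono hq s) _
      _ = _ := add_comm _ _
  have hdiag : w r r ≤ v r := by
    have hlt : degu ux u (q * a s r) r < w r r :=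
      lt_of_add_lt_add_right ((walk r).trans_lt (hw.apply_add_apply_lt_diag hr hs hrs))
    have hdeg : (q * a s r).degree < (a r r).degree :=
      lt_of_not_ge fun h => hlt.not_ge (degu_mono h r)
    exact degu_mono (Polynomial.degree_sub_eq_left_of_degree_lt hdeg).ge r
  have hv (j : ℕ) : v j ≤ w r j ∨ v j + w s s ≤ w r s + w s j :=
    (le_max_iff.1 (degu_sub_le (a r j) (q * a s j) j)).imp_right fun h =>
      (add_le_add_left h _).trans (walk j)
  have h := isUniqueMaxDiagonal_iff_forall_bijOn.1 (hw.update_row hr hs hrs hdiag hv) π hπ hne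
  rwa [sum_update_row hr w v π,
    sum_update_row hr w v fun i => i] at h

/-- Proposition 5 (case `d ≥ 0`): after the update `b_{rj} = a_{rj} − c·x^d·a_{sj}`,
the invariant (iii) persists: for every non-identity permutation `π` of `{1,…,r}`,
`Σ_{i ≠ r} deg_u(a_{ii} e_i) + deg_u(b_{rr} e_r)
  > Σ_{i ≠ r} deg_u(a_{iπ(i)} e_{π(i)}) + deg_u(b_{rπ(r)} e_{π(r)})`. -/
theorem stmt_16 (k : Type*) [Field k] (m : ℕ) (hm : 1 ≤ m)
    (ux : ℕ) (hux : 0 < ux) (u : ℕ → ℕ) (hupos : ∀ i, 0 < u i)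
    (r s : ℕ) (hs : 1 ≤ s) (hsr : s < r) (hrm : r ≤ m)
    (a : ℕ → ℕ → Polynomial k)
    -- (E1)
    (hE1 : ∀ j, s < j → j ≤ r → degu ux u (a s j) j < degu ux u (a s s) s)
    (hE1' : ∀ j', 1 ≤ j' → j' < s → degu ux u (a s j') j' ≤ degu ux u (a s s) s)
    -- (E2)
    (hE2 : ∀ j, s < j → j ≤ r → degu ux u (a r j) j < degu ux u (a r s) s)
    (hE2' : ∀ j', 1 ≤ j' → j' < s → degu ux u (a r j') j' ≤ degu ux u (a r s) s)
    -- (E3)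
    (hE3 : ∀ π : ℕ → ℕ, Set.BijOn π (Set.Icc 1 r) (Set.Icc 1 r) →
      (∃ i ∈ Set.Icc 1 r, π i ≠ i) →
      ∑ i ∈ Finset.Icc 1 r, degu ux u (a i (π i)) (π i) <
        ∑ i ∈ Finset.Icc 1 r, degu ux u (a i i) i)
    -- (E4)
    (hE4 : ∀ i, 1 ≤ i → i ≤ r - 1 → ∀ j, 1 ≤ j → j ≤ r →
      degu ux u (a i j) j ≤ degu ux u (a i i) i)
    (hass : a s s ≠ 0) (hars : a r s ≠ 0)
    (hd : (a s s).natDegree ≤ (a r s).natDegree)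
    (d : ℕ) (hdd : d = (a r s).natDegree - (a s s).natDegree)
    (c : k) (hc : c = (a r s).leadingCoeff * (a s s).leadingCoeff⁻¹)
    (b : ℕ → Polynomial k)
    (hb : ∀ j, b j = a r j - Polynomial.C c * Polynomial.X ^ d * a s j) :
    ∀ π : ℕ → ℕ, Set.BijOn π (Set.Icc 1 r) (Set.Icc 1 r) →
      (∃ i ∈ Set.Icc 1 r, π i ≠ i) →
      ∑ i ∈ (Finset.Icc 1 r).erase r, degu ux u (a i (π i)) (π i) +
          degu ux u (b (π r)) (π r) <
        ∑ i ∈ (Finset.Icc 1 r).erase r, degu ux u (a i i) i + degu ux u (b r) r := by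
  simp only [hb, ← Finset.coe_Icc, Finset.mem_coe] at hE3 ⊢
  exact stmt_16_general ux u (Finset.mem_Icc.2 ⟨hs.trans hsr.le, le_rfl⟩)
    (Finset.mem_Icc.2 ⟨hs, hsr.le⟩) hsr.ne' a hE3 (Polynomial.C c * Polynomial.X ^ d)
    (degree_C_mul_X_pow_mul_le c hars (by omega))
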